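/- arXiv:0808.0414 — 2 statements merged into one kernel-verified Lean document; each statement's English description precedes it below -/
import Mathlib

section
/- If f is an integrable vector field on R^n with div f = 0 in the sense of distributions, then the integral of f over R^n is zero. -/
open MeasureTheory RealInnerProductSpace

section

open Filter Topology

variable {E : Type*} [NormedAddCommGroup E] [InnerProductSpace ℝ E]

/-- Every vector is the gradient at the origin of some test function. -/
lemma exists_contDiff_hasCompactSupport_hasGradientAt_zero [FiniteDimensional ℝ E] (v : E) :
    ∃ g : E → ℝ, ContDiff ℝ (⊤ : ℕ∞) g ∧ HasCompactSupport g ∧ HasGradientAt g v 0 := by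
  let ψ : ContDiffBump (0 : E) := ⟨1, 2, one_pos, one_lt_two⟩
  refine ⟨fun x => ψ x * ⟪v, x⟫, ψ.contDiff.mul (contDiff_const.inner ℝ contDiff_id),
    ψ.hasCompactSupport.mul_right, ?_⟩
  have h : HasGradientAt (fun x : E => ⟪v, x⟫) v 0 :=
    ((InnerProductSpace.toDual ℝ E) v).hasFDerivAt
  refine HasFDerivAt.congr_of_eventuallyEq h ?_
  filter_upwards [ψ.eventuallyEq_one] with x hx
  simp [hx]

/-- The dilation `x ↦ c⁻¹ g (c x)` has gradient `∇g (c x)`. -/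
lemma gradient_inv_mul_comp_smul [CompleteSpace E] {g : E → ℝ} (hg : Differentiable ℝ g) {c : ℝ}
    (hc : c ≠ 0) (x : E) :
    gradient (fun y => c⁻¹ * g (c • y)) x = gradient g (c • x) := by
  have h := (((hg (c • x)).hasFDerivAt.comp x
    ((hasFDerivAt_id x).const_smul c)).const_mul c⁻¹).fderiv
  simp only [gradient]
  congr 1
  refine h.trans ?_
  ext y
  simp [hc]

/-- An integrable vector field with vanishing distributional divergence has zero integral. -/
theorem integral_eq_zero_of_forall_integral_inner_gradient_eq_zero [FiniteDimensional ℝ E]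
    [MeasurableSpace E] [BorelSpace E] {μ : Measure E} {f : E → E} (hf : Integrable f μ)
    (hdiv : ∀ φ : E → ℝ, ContDiff ℝ (⊤ : ℕ∞) φ → HasCompactSupport φ →
      ∫ x, ⟪f x, gradient φ x⟫ ∂μ = 0) :
    ∫ x, f x ∂μ = 0 := by
  refine ext_inner_left ℝ fun v => ?_
  rw [inner_zero_right, ← integral_inner hf]
  obtain ⟨g, hg, hgc, hgv⟩ := exists_contDiff_hasCompactSupport_hasGradientAt_zero v
  have hgrad : Continuous (gradient g) :=
    (InnerProductSpace.toDual ℝ E).symm.continuous.comp (hg.continuous_fderiv (by simp))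
  have hsupp : HasCompactSupport (gradient g) :=
    (hgc.fderiv ℝ).comp_left (map_zero (InnerProductSpace.toDual ℝ E).symm)
  obtain ⟨C, hC⟩ := hgrad.bounded_above_of_compact_support hsupp
  let c : ℕ → ℝ := fun k => 1 / ((k : ℝ) + 1)
  have hc (k : ℕ) : c k ≠ 0 := (Nat.one_div_pos_of_nat (α := ℝ)).ne'
  have hzero (k : ℕ) : ∫ x, ⟪f x, gradient g (c k • x)⟫ ∂μ = 0 := by
    simp_rw [← gradient_inv_mul_comp_smul (hg.differentiable (by simp)) (hc k)]
    exact hdiv _ (contDiff_const.mul (hg.comp (contDiff_const_smul _)))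
      (hgc.comp_smul (hc k)).mul_left
  have hlim : Tendsto (fun k => ∫ x, ⟪f x, gradient g (c k • x)⟫ ∂μ) atTop
      (𝓝 (∫ x, ⟪f x, v⟫ ∂μ)) := by
    refine tendsto_integral_of_dominated_convergence (fun x => ‖f x‖ * C) (fun k => ?_)
      (hf.norm.mul_const C) (fun k => ae_of_all _ fun x => ?_) (ae_of_all _ fun x => ?_)
    · exact hf.aestronglyMeasurable.inner
        (hgrad.comp (continuous_const_smul (c k))).aestronglyMeasurable
    · exact (norm_inner_le_norm _ _).trans (by gcongr; exact hC _)
    · have hx : Tendsto (fun k => c k • x) atTop (𝓝 0) := by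
        simpa [c] using (tendsto_one_div_add_atTop_nhds_zero_nat (𝕜 := ℝ)).smul_const x
      have h := (hgrad.tendsto 0).comp hx
      rw [hgv.gradient] at h
      exact tendsto_const_nhds.inner h
  simp_rw [hzero] at hlim
  simp_rw [real_inner_comm _ v]
  exact tendsto_nhds_unique hlim tendsto_const_nhds

end

/-- If `f` is an integrable vector field on `ℝⁿ` whose distributional divergence vanishes
(i.e. `∫ ⟪f x, ∇φ x⟫ dx = 0` for all smooth compactly supported test functions `φ`),
then `∫ f dx = 0`. -/
theorem stmt_0 (n : ℕ) (f : EuclideanSpace ℝ (Fin n) → EuclideanSpace ℝ (Fin n))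
    (hf : Integrable f)
    (hdiv : ∀ φ : EuclideanSpace ℝ (Fin n) → ℝ, ContDiff ℝ (⊤ : ℕ∞) φ → HasCompactSupport φ →
      ∫ x, ⟪f x, gradient φ x⟫ = 0) :
    ∫ x, f x = 0 := by
  exact integral_eq_zero_of_forall_integral_inner_gradient_eq_zero hf hdiv
end

section
/- For n ≥ 2 and f ∈ L^1(R^n), the three-part kernel estimate ∫_{R^n} (A_1(x) + A_2(x) + A_3(x)) |x|^{-1} dx ≤ c(n) ‖f‖_{L^1} holds, where A_1(x) = |x|^{-n} ∫_{|y|<|x|/2} |f(y)||y| dy, A_2(x) = ∫_{|x|/2 < |y| < 2|x|} |f(y)| |y−x|^{1-n} dy, and A_3(x) = ∫_{|y| > 2|x|} |f(y)| |y|^{1-n} dy. -/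
open MeasureTheory

/-- The surface measure `n * |B(0,1)|` of the unit sphere of a normed space. -/
noncomputable def sphereArea (E : Type*) [NormedAddCommGroup E] [NormedSpace ℝ E]
    [MeasureSpace E] : ℝ :=
  Module.finrank ℝ E * volume.real (Metric.ball (0 : E) 1)

section Radial

variable {E : Type*} [NormedAddCommGroup E] [NormedSpace ℝ E] [MeasureSpace E]

theorem sphereArea_nonneg : 0 ≤ sphereArea E := by
  unfold sphereArea
  positivity

variable [BorelSpace E] [FiniteDimensional ℝ E] [Nontrivial E]
  [(volume : Measure E).IsAddHaarMeasure]

theorem lintegral_ofReal_fun_norm {g : ℝ → ℝ} (hg : ∀ r, 0 ≤ r → 0 ≤ g r)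
    (hi : IntegrableOn (fun r : ℝ ↦ r ^ (Module.finrank ℝ E - 1) * g r) (Set.Ioi 0)) :
    ∫⁻ x : E, ENNReal.ofReal (g ‖x‖) =
      ENNReal.ofReal (sphereArea E *
        ∫ r in Set.Ioi (0 : ℝ), r ^ (Module.finrank ℝ E - 1) * g r) := by
  have hint : Integrable (fun x : E ↦ g ‖x‖) :=
    (integrable_fun_norm_addHaar (volume : Measure E)).2 hi
  rw [← ofReal_integral_eq_lintegral_ofReal hint (.of_forall fun x ↦ hg _ (norm_nonneg x)),
    integral_fun_norm_addHaar (volume : Measure E) g]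
  simp [sphereArea, mul_assoc]

/-- `∫_{|x| < R} |x|^{1-n} dx` is a constant multiple of `R`. -/
theorem lintegral_norm_lt_rpow {R : ℝ} (hR : 0 ≤ R) :
    ∫⁻ x : E, ENNReal.ofReal
        (if ‖x‖ < R then ‖x‖ ^ ((1 : ℝ) - (Module.finrank ℝ E : ℝ)) else 0) =
      ENNReal.ofReal (sphereArea E * R) := by
  set d := Module.finrank ℝ E
  have hd1 : 1 ≤ d := Module.finrank_pos
  have heq : Set.EqOn (fun r : ℝ ↦ r ^ (d - 1) * (if r < R then r ^ ((1 : ℝ) - (d : ℝ)) else 0))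
      ((Set.Iio R).indicator fun _ ↦ 1) (Set.Ioi 0) := by
    intro r (hr : 0 < r)
    by_cases h : r < R
    · have : (r : ℝ) ^ (d - 1) = r ^ ((d : ℝ) - 1) := by
        rw [← Real.rpow_natCast, Nat.cast_sub hd1, Nat.cast_one]
      simp only [h, if_true, Set.mem_Iio, Set.indicator_of_mem, this]
      rw [← Real.rpow_add hr]
      simp
    · simp [h]
  have hvol : Set.Ioi (0 : ℝ) ∩ Set.Iio R = Set.Ioo 0 R := rfl
  have hi : IntegrableOn ((Set.Iio R).indicator fun _ ↦ (1 : ℝ)) (Set.Ioi 0) := by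
    rw [IntegrableOn, integrable_indicator_iff measurableSet_Iio, IntegrableOn,
      Measure.restrict_restrict measurableSet_Iio, Set.inter_comm, hvol]
    simp
  rw [lintegral_ofReal_fun_norm (g := fun r ↦ if r < R then r ^ ((1 : ℝ) - (d : ℝ)) else 0)
    (fun r hr ↦ by positivity)
    ((integrableOn_congr_fun heq measurableSet_Ioi).2 hi),
    setIntegral_congr_fun measurableSet_Ioi heq, setIntegral_indicator measurableSet_Iio, hvol]
  simp [hR]

/-- `∫_{|x| > R} |x|^{-n-1} dx` is a constant multiple of `R⁻¹`. -/
theorem lintegral_lt_norm_rpow {R : ℝ} (hR : 0 < R) :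
    ∫⁻ x : E, ENNReal.ofReal
        (if R < ‖x‖ then ‖x‖ ^ (-(Module.finrank ℝ E : ℝ) - 1) else 0) =
      ENNReal.ofReal (sphereArea E * R⁻¹) := by
  set d := Module.finrank ℝ E
  have hd1 : 1 ≤ d := Module.finrank_pos
  have heq : Set.EqOn (fun r : ℝ ↦ r ^ (d - 1) * (if R < r then r ^ (-(d : ℝ) - 1) else 0))
      ((Set.Ioi R).indicator fun r ↦ r ^ (-2 : ℝ)) (Set.Ioi 0) := by
    intro r (hr : 0 < r)
    by_cases h : R < r
    · have : (r : ℝ) ^ (d - 1) = r ^ ((d : ℝ) - 1) := by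
        rw [← Real.rpow_natCast, Nat.cast_sub hd1, Nat.cast_one]
      simp only [h, if_true, Set.mem_Ioi, Set.indicator_of_mem, this]
      rw [← Real.rpow_add hr]
      congr 1
      ring
    · simp [h]
  have hinter : Set.Ioi (0 : ℝ) ∩ Set.Ioi R = Set.Ioi R := by
    simp [Set.Ioi_inter_Ioi, hR.le]
  have hi : IntegrableOn ((Set.Ioi R).indicator fun r ↦ r ^ (-2 : ℝ)) (Set.Ioi 0) := by
    rw [IntegrableOn, integrable_indicator_iff measurableSet_Ioi, IntegrableOn,
      Measure.restrict_restrict measurableSet_Ioi, Set.inter_comm, hinter]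
    exact integrableOn_Ioi_rpow_of_lt (by norm_num) hR
  rw [lintegral_ofReal_fun_norm (g := fun r ↦ if R < r then r ^ (-(d : ℝ) - 1) else 0)
    (fun r hr ↦ by positivity)
    ((integrableOn_congr_fun heq measurableSet_Ioi).2 hi),
    setIntegral_congr_fun measurableSet_Ioi heq, setIntegral_indicator measurableSet_Ioi, hinter,
    integral_Ioi_rpow_of_lt (by norm_num) hR]
  norm_num [Real.rpow_neg_one]

/-- `|y| ∫_{|x| > 2|y|} |x|^{-n-1} dx ≤ c`. -/
theorem lintegral_far_kernel_le (y : E) :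
    ∫⁻ x : E, ENNReal.ofReal (if ‖y‖ < ‖x‖ / 2 then
        ‖x‖ ^ (-(Module.finrank ℝ E : ℝ)) * ‖y‖ * ‖x‖⁻¹ else 0) ≤
      ENNReal.ofReal (sphereArea E) := by
  rcases eq_or_ne y 0 with rfl | hy
  · simp
  have hy' : 0 < ‖y‖ := norm_pos_iff.2 hy
  calc
    _ = ∫⁻ x : E, ENNReal.ofReal ‖y‖ * ENNReal.ofReal
          (if 2 * ‖y‖ < ‖x‖ then ‖x‖ ^ (-(Module.finrank ℝ E : ℝ) - 1) else 0) := by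
      refine lintegral_congr fun x ↦ ?_
      rw [← ENNReal.ofReal_mul hy'.le]
      by_cases h : 2 * ‖y‖ < ‖x‖
      · have hx : 0 < ‖x‖ := by linarith
        rw [if_pos (by linarith), if_pos h, Real.rpow_sub_one hx.ne']
        congr 1
        ring
      · rw [if_neg (by linarith), if_neg h, mul_zero]
    _ = ENNReal.ofReal (‖y‖ * (sphereArea E * (2 * ‖y‖)⁻¹)) := by
      rw [lintegral_const_mul' _ _ ENNReal.ofReal_ne_top, lintegral_lt_norm_rpow (by positivity),
        ← ENNReal.ofReal_mul hy'.le]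
    _ ≤ _ := by
      apply ENNReal.ofReal_le_ofReal
      have : ‖y‖ * (sphereArea E * (2 * ‖y‖)⁻¹) = sphereArea E / 2 := by
        field_simp
      linarith [sphereArea_nonneg (E := E)]

/-- `∫_{|y|/2 < |x| < 2|y|} |x|^{-1} |x-y|^{1-n} dx ≤ c`. -/
theorem lintegral_comparable_kernel_le (y : E) :
    ∫⁻ x : E, ENNReal.ofReal (if ‖x‖ / 2 < ‖y‖ ∧ ‖y‖ < 2 * ‖x‖ then
        ‖y - x‖ ^ ((1 : ℝ) - (Module.finrank ℝ E : ℝ)) * ‖x‖⁻¹ else 0) ≤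
      ENNReal.ofReal (6 * sphereArea E) := by
  calc
    _ ≤ ∫⁻ x : E, ENNReal.ofReal (2 * ‖y‖⁻¹) * ENNReal.ofReal
          (if ‖x - y‖ < 3 * ‖y‖ then
            ‖x - y‖ ^ ((1 : ℝ) - (Module.finrank ℝ E : ℝ)) else 0) := by
      refine lintegral_mono fun x ↦ ?_
      rw [← ENNReal.ofReal_mul (by positivity)]
      apply ENNReal.ofReal_le_ofReal
      by_cases h : ‖x‖ / 2 < ‖y‖ ∧ ‖y‖ < 2 * ‖x‖
      · have hx : 0 < ‖x‖ := by linarith [norm_nonneg y]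
        have hy : 0 < ‖y‖ := by linarith
        rw [if_pos h, if_pos (by linarith [norm_sub_le x y]), norm_sub_rev, mul_comm]
        refine mul_le_mul_of_nonneg_right ?_ (by positivity)
        rw [← div_eq_mul_inv, inv_le_comm₀ hx (by positivity), inv_div]
        linarith
      · rw [if_neg h]
        positivity
    _ = ENNReal.ofReal (2 * ‖y‖⁻¹ * (sphereArea E * (3 * ‖y‖))) := by
      rw [lintegral_const_mul' _ _ ENNReal.ofReal_ne_top,
        lintegral_sub_right_eq_self (fun x : E ↦ ENNReal.ofReal
          (if ‖x‖ < 3 * ‖y‖ then ‖x‖ ^ ((1 : ℝ) - (Module.finrank ℝ E : ℝ)) else 0)) y,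
        lintegral_norm_lt_rpow (by positivity), ← ENNReal.ofReal_mul (by positivity)]
    _ ≤ _ := by
      apply ENNReal.ofReal_le_ofReal
      have h1 : ‖y‖⁻¹ * ‖y‖ ≤ 1 := inv_mul_le_one
      nlinarith [sphereArea_nonneg (E := E)]

/-- `|y|^{1-n} ∫_{|x| < |y|/2} |x|^{-1} dx ≤ c`, provided that `n ≥ 2`. -/
theorem lintegral_near_kernel_le (hE : 2 ≤ Module.finrank ℝ E) (y : E) :
    ∫⁻ x : E, ENNReal.ofReal (if 2 * ‖x‖ < ‖y‖ then
        ‖y‖ ^ ((1 : ℝ) - (Module.finrank ℝ E : ℝ)) * ‖x‖⁻¹ else 0) ≤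
      ENNReal.ofReal (sphereArea E) := by
  have hE' : (2 : ℝ) ≤ Module.finrank ℝ E := by exact_mod_cast hE
  calc
    _ ≤ ∫⁻ x : E, ENNReal.ofReal ‖y‖⁻¹ * ENNReal.ofReal
          (if ‖x‖ < ‖y‖ then ‖x‖ ^ ((1 : ℝ) - (Module.finrank ℝ E : ℝ)) else 0) := by
      refine lintegral_mono fun x ↦ ?_
      rw [← ENNReal.ofReal_mul (by positivity)]
      apply ENNReal.ofReal_le_ofReal
      by_cases h : 2 * ‖x‖ < ‖y‖
      · have hxy : ‖x‖ < ‖y‖ := by linarith [norm_nonneg x]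
        rw [if_pos h, if_pos hxy]
        rcases (norm_nonneg x).eq_or_lt with hx | hx
        · rw [← hx, inv_zero, mul_zero]
          positivity
        have hy : 0 < ‖y‖ := hx.trans hxy
        have hpow : ∀ t : ℝ, 0 < t → t ^ ((1 : ℝ) - (Module.finrank ℝ E : ℝ)) =
            t ^ ((2 : ℝ) - (Module.finrank ℝ E : ℝ)) * t⁻¹ := by
          intro t ht
          rw [← div_eq_mul_inv, ← Real.rpow_sub_one ht.ne']
          congr 1
          ring
        rw [hpow _ hx, hpow _ hy]
        have := Real.rpow_le_rpow_of_nonpos hx hxy.le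
          (show (2 : ℝ) - (Module.finrank ℝ E : ℝ) ≤ 0 by linarith)
        calc
          _ = ‖y‖⁻¹ * (‖y‖ ^ ((2 : ℝ) - (Module.finrank ℝ E : ℝ)) * ‖x‖⁻¹) := by ring
          _ ≤ _ := by gcongr
      · rw [if_neg h]
        positivity
    _ = ENNReal.ofReal (‖y‖⁻¹ * (sphereArea E * ‖y‖)) := by
      rw [lintegral_const_mul' _ _ ENNReal.ofReal_ne_top,
        lintegral_norm_lt_rpow (by positivity), ← ENNReal.ofReal_mul (by positivity)]
    _ ≤ _ := by
      apply ENNReal.ofReal_le_ofReal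
      have h1 : ‖y‖⁻¹ * ‖y‖ ≤ 1 := inv_mul_le_one
      nlinarith [sphereArea_nonneg (E := E)]

end Radial

section Tonelli

variable {α β : Type*} [MeasurableSpace α] [MeasurableSpace β] {μ : Measure α} {ν : Measure β}

theorem measurableSet_lt_and_lt {f₁ g₁ f₂ g₂ : α → ℝ} (hf₁ : Measurable f₁) (hg₁ : Measurable g₁)
    (hf₂ : Measurable f₂) (hg₂ : Measurable g₂) :
    MeasurableSet {a | f₁ a < g₁ a ∧ f₂ a < g₂ a} := by
  rw [Set.ofPred_and]
  exact (measurableSet_lt hf₁ hg₁).inter (measurableSet_lt hf₂ hg₂)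

theorem ofReal_setIntegral_mul_le_lintegral {f g : β → ℝ} {s : Set β} [DecidablePred (· ∈ s)]
    (hs : MeasurableSet s) (hg : ∀ y, 0 ≤ g y) :
    ENNReal.ofReal (∫ y in s, |f y| * g y ∂ν) ≤
      ∫⁻ y, ‖f y‖ₑ * ENNReal.ofReal (if y ∈ s then g y else 0) ∂ν := by
  calc
    _ ≤ ‖∫ y in s, |f y| * g y ∂ν‖ₑ := Real.ofReal_le_enorm _
    _ ≤ ∫⁻ y in s, ‖|f y| * g y‖ₑ ∂ν := enorm_integral_le_lintegral_enorm _
    _ = _ := by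
      rw [← lintegral_indicator hs]
      refine lintegral_congr fun y ↦ ?_
      by_cases h : y ∈ s <;> simp [h, Real.enorm_of_nonneg (hg y)]

theorem aemeasurable_enorm_mul_kernel [SFinite ν] {f : β → ℝ}
    (hf : AEStronglyMeasurable f ν) {k : α → β → ENNReal} (hk : Measurable (Function.uncurry k)) :
    AEMeasurable (Function.uncurry fun x y ↦ ‖f y‖ₑ * k x y) (μ.prod ν) :=
  hf.enorm.comp_snd.mul hk.aemeasurable

theorem lintegral_lintegral_enorm_mul_kernel_le [SFinite μ] [SFinite ν] {f : β → ℝ}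
    (hf : AEStronglyMeasurable f ν) {k : α → β → ENNReal} (hk : Measurable (Function.uncurry k))
    {C : ENNReal} (hC : ∀ y, ∫⁻ x, k x y ∂μ ≤ C) :
    ∫⁻ x, ∫⁻ y, ‖f y‖ₑ * k x y ∂ν ∂μ ≤ C * ∫⁻ y, ‖f y‖ₑ ∂ν := by
  rw [lintegral_lintegral_swap (aemeasurable_enorm_mul_kernel hf hk),
    ← lintegral_const_mul'' _ hf.enorm]
  refine lintegral_mono fun y ↦ ?_
  rw [lintegral_const_mul' _ _ enorm_ne_top, mul_comm]
  gcongr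
  exact hC y

end Tonelli

/-- The three-part kernel estimate
`∫ (A₁(x)+A₂(x)+A₃(x)) |x|⁻¹ dx ≤ c(n) ‖f‖_{L¹}`, where
`A₁(x) = |x|^{-n} ∫_{|y|<|x|/2} |f(y)||y| dy`,
`A₂(x) = ∫_{|x|/2<|y|<2|x|} |f(y)||y−x|^{1-n} dy`,
`A₃(x) = ∫_{|y|>2|x|} |f(y)||y|^{1-n} dy`. -/
theorem stmt_6 (n : ℕ) (hn : 2 ≤ n) :
    ∃ c : ℝ, 0 < c ∧ ∀ f : EuclideanSpace ℝ (Fin n) → ℝ, Integrable f →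
      (∫⁻ x : EuclideanSpace ℝ (Fin n), ENNReal.ofReal
          (((‖x‖ ^ (-(n : ℝ)) * ∫ y in {y : EuclideanSpace ℝ (Fin n) | ‖y‖ < ‖x‖ / 2},
                |f y| * ‖y‖) +
              (∫ y in {y : EuclideanSpace ℝ (Fin n) | ‖x‖ / 2 < ‖y‖ ∧ ‖y‖ < 2 * ‖x‖},
                |f y| * ‖y - x‖ ^ ((1 : ℝ) - n)) +
              (∫ y in {y : EuclideanSpace ℝ (Fin n) | 2 * ‖x‖ < ‖y‖},
                |f y| * ‖y‖ ^ ((1 : ℝ) - n))) * ‖x‖⁻¹)) ≤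
        ENNReal.ofReal (c * ∫ y, |f y|) := by
  have hnt : Nontrivial (EuclideanSpace ℝ (Fin n)) :=
    Module.nontrivial_of_finrank_pos (R := ℝ) (by rw [finrank_euclideanSpace_fin]; lia)
  set ω := sphereArea (EuclideanSpace ℝ (Fin n))
  have hω0 : 0 ≤ ω := sphereArea_nonneg
  refine ⟨8 * ω + 1, by positivity, fun f hf ↦ ?_⟩
  let k₁ : EuclideanSpace ℝ (Fin n) → EuclideanSpace ℝ (Fin n) → ENNReal := fun x y ↦
    ENNReal.ofReal (if ‖y‖ < ‖x‖ / 2 then ‖x‖ ^ (-(n : ℝ)) * ‖y‖ * ‖x‖⁻¹ else 0)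
  let k₂ : EuclideanSpace ℝ (Fin n) → EuclideanSpace ℝ (Fin n) → ENNReal := fun x y ↦
    ENNReal.ofReal (if ‖x‖ / 2 < ‖y‖ ∧ ‖y‖ < 2 * ‖x‖ then
      ‖y - x‖ ^ ((1 : ℝ) - n) * ‖x‖⁻¹ else 0)
  let k₃ : EuclideanSpace ℝ (Fin n) → EuclideanSpace ℝ (Fin n) → ENNReal := fun x y ↦
    ENNReal.ofReal (if 2 * ‖x‖ < ‖y‖ then ‖y‖ ^ ((1 : ℝ) - n) * ‖x‖⁻¹ else 0)
  have hk₁ : Measurable (Function.uncurry k₁) :=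
    (Measurable.ite (measurableSet_lt (by fun_prop) (by fun_prop))
      (by fun_prop) measurable_const).ennreal_ofReal
  have hk₂ : Measurable (Function.uncurry k₂) :=
    (Measurable.ite (measurableSet_lt_and_lt (by fun_prop) (by fun_prop) (by fun_prop)
      (by fun_prop)) (by fun_prop) measurable_const).ennreal_ofReal
  have hk₃ : Measurable (Function.uncurry k₃) :=
    (Measurable.ite (measurableSet_lt (by fun_prop) (by fun_prop))
      (by fun_prop) measurable_const).ennreal_ofReal
  have hC₁ : ∀ y, ∫⁻ x, k₁ x y ≤ ENNReal.ofReal ω := fun y ↦ by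
    simpa only [finrank_euclideanSpace_fin] using lintegral_far_kernel_le y
  have hC₂ : ∀ y, ∫⁻ x, k₂ x y ≤ ENNReal.ofReal (6 * ω) := fun y ↦ by
    simpa only [finrank_euclideanSpace_fin] using lintegral_comparable_kernel_le y
  have hC₃ : ∀ y, ∫⁻ x, k₃ x y ≤ ENNReal.ofReal ω := fun y ↦ by
    simpa only [finrank_euclideanSpace_fin] using
      lintegral_near_kernel_le (by rwa [finrank_euclideanSpace_fin]) y
  have hmeas {k : EuclideanSpace ℝ (Fin n) → EuclideanSpace ℝ (Fin n) → ENNReal}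
      (hk : Measurable (Function.uncurry k)) : AEMeasurable fun x ↦ ∫⁻ y, ‖f y‖ₑ * k x y :=
    (aemeasurable_enorm_mul_kernel hf.1 hk).lintegral_prod_right'
  calc
    _ ≤ ∫⁻ x, ((∫⁻ y, ‖f y‖ₑ * k₁ x y) + (∫⁻ y, ‖f y‖ₑ * k₂ x y) +
          ∫⁻ y, ‖f y‖ₑ * k₃ x y) := by
      refine lintegral_mono fun x ↦ ?_
      rw [add_mul, add_mul]
      refine ENNReal.ofReal_add_le.trans (add_le_add (ENNReal.ofReal_add_le.trans
        (add_le_add ?_ ?_)) ?_)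
      · rw [mul_right_comm, mul_comm, ← integral_mul_const]
        simp only [mul_assoc]
        refine (ofReal_setIntegral_mul_le_lintegral
          (measurableSet_lt (by fun_prop) (by fun_prop)) fun y ↦ by positivity).trans_eq ?_
        refine lintegral_congr fun y ↦ ?_
        simp only [k₁, Set.mem_ofPred_eq]
        congr 3
        ring
      · rw [← integral_mul_const]
        simp only [mul_assoc]
        exact ofReal_setIntegral_mul_le_lintegral
          (measurableSet_lt_and_lt (by fun_prop) (by fun_prop) (by fun_prop) (by fun_prop)) fun y ↦ by positivity
      · rw [← integral_mul_const]
        simp only [mul_assoc]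
        exact ofReal_setIntegral_mul_le_lintegral
          (measurableSet_lt (by fun_prop) (by fun_prop)) fun y ↦ by positivity
    _ ≤ ENNReal.ofReal ω * (∫⁻ y, ‖f y‖ₑ) + ENNReal.ofReal (6 * ω) * (∫⁻ y, ‖f y‖ₑ) +
          ENNReal.ofReal ω * ∫⁻ y, ‖f y‖ₑ := by
      rw [lintegral_add_right' _ (hmeas hk₃), lintegral_add_left' (hmeas hk₁)]
      gcongr
      · exact lintegral_lintegral_enorm_mul_kernel_le hf.1 hk₁ hC₁
      · exact lintegral_lintegral_enorm_mul_kernel_le hf.1 hk₂ hC₂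
      · exact lintegral_lintegral_enorm_mul_kernel_le hf.1 hk₃ hC₃
    _ = ENNReal.ofReal (8 * ω * ∫ y, |f y|) := by
      have hnorm := ofReal_integral_norm_eq_lintegral_enorm hf
      simp only [Real.norm_eq_abs] at hnorm
      have hI : 0 ≤ ∫ y, |f y| := integral_nonneg fun y ↦ abs_nonneg _
      rw [← hnorm, ← add_mul, ← add_mul, ← ENNReal.ofReal_add hω0 (by positivity),
        ← ENNReal.ofReal_add (by positivity) hω0, ← ENNReal.ofReal_mul (by positivity)]
      congr 2
      ring
    _ ≤ _ := by
      have hI : 0 ≤ ∫ y, |f y| := integral_nonneg fun y ↦ abs_nonneg _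
      gcongr
      linarith
end
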